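/- Let V be a finite-dimensional normed vector space, U a Banach space, 1 ≤ p < 2, ω a control on {(s,t): 0≤s≤t<∞}, and x:[0,∞)→U a path of finite p-variation controlled by ω: ‖x_t − x_s‖ ≤ ‖x‖_p·ω_{s,t}^{1/p}. Let f:V→L(U,V) be bounded, of class C¹ with bounded derivative (f ∈ C¹_b), and define φ_{t,s}(a) := a + f(a)(x_t − x_s). Then for T > 0 small enough there exists a family ψ = (ψ_{t,s})_{0≤s≤t≤T} of maps from V to V such that: (1) ψ_{t,t}(a) = a and ψ_{t,s}(ψ_{s,r}(a)) = ψ_{t,r}(a) for all 0 ≤ r ≤ s ≤ t ≤ T and a ∈ V (flow property); (2) each ψ_{t,s} is Borel measurable; (3) there is a constant C with ‖ψ_{t,s}(a) − φ_{t,s}(a)‖ ≤ C·(1+‖f(a)‖)·ω_{s,t}^{2/p} for all 0 ≤ s ≤ t ≤ T and a ∈ V. In particular, each path t ↦ ψ_{t,0}(a) is a solution in the sense of Davie of the Young differential equation y_t = a + ∫₀ᵗ f(y_s) dx_s, even though such solutions need not be unique for f merely C¹_b. -/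

import Mathlib

open Set

noncomputable section

/-- A control: a super-additive family `ω` vanishing on the diagonal and small
near the diagonal. -/
structure IsControl (T : ℝ) (ω : ℝ → ℝ → ℝ) : Prop where
  nonneg : ∀ ⦃s t : ℝ⦄, 0 ≤ s → s ≤ t → t ≤ T → 0 ≤ ω s t
  superadd : ∀ ⦃r s t : ℝ⦄, 0 ≤ r → r ≤ s → s ≤ t → t ≤ T → ω r s + ω s t ≤ ω r t
  diag : ∀ ⦃s : ℝ⦄, 0 ≤ s → s ≤ T → ω s s = 0
  small : ∀ ε > (0:ℝ), ∃ h > (0:ℝ), ∀ ⦃s t : ℝ⦄, 0 ≤ s → s ≤ t → t ≤ T → t - s ≤ h → ω s t < ε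

/-- A remainder: a continuous increasing function `ϖ` with `2ϖ(x/2) ≤ κϖ(x)`. -/
structure IsRemainder (κ : ℝ) (ϖ : ℝ → ℝ) : Prop where
  contOn : ContinuousOn ϖ (Set.Ici 0)
  strictMonoOn : StrictMonoOn ϖ (Set.Ici 0)
  nonneg : ∀ x, 0 ≤ x → 0 ≤ ϖ x
  doubling : ∀ x, 0 < x → 2 * ϖ (x / 2) ≤ κ * ϖ x

/-!
The one-step Euler maps of the Young equation form an almost flow: they satisfy the flow property
up to `C * ω r t ^ (2 / p)`. Cutting an interval at two consecutive partition points so that the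
control is at most halved on either side shows that every Euler scheme satisfies the Davie estimate
with a constant `L` independent of the partition, and a compactness argument produces solutions.
With `L` fixed, the solutions from a given point form a compact set which is closed under restart,
and also under concatenation: a concatenation is a Davie solution with a larger constant, and the
same halving argument brings any constant back to `L`. Solutions may fail to be unique, but
maximizing lexicographically countably many functionals, each an evaluation at a time in a dense
set followed by a function on `V`, singles out one of them. The choice is measurable in the starting
point, and its uniqueness together with the closure properties makes it a flow.
-/

open Filter Topology

section LexMaximizers

variable {A E : Type*}

/-- The successive argmax sets of `F 0, F 1, …`: stage `k + 1` keeps the points of stage `k` at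
which `F k` is maximal. Its intersection over `k` is the set of lexicographic maximizers. -/
def iteratedArgmax (F : ℕ → E → ℝ) (S : Set E) : ℕ → Set E
  | 0 => S
  | k + 1 => {y ∈ iteratedArgmax F S k | IsMaxOn (F k) (iteratedArgmax F S k) y}

theorem iteratedArgmax_succ_subset (F : ℕ → E → ℝ) (S : Set E) (k : ℕ) :
    iteratedArgmax F S (k + 1) ⊆ iteratedArgmax F S k :=
  fun _ hy => hy.1

theorem iteratedArgmax_subset (F : ℕ → E → ℝ) (S : Set E) (k : ℕ) :
    iteratedArgmax F S k ⊆ S :=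
  antitone_nat_of_succ_le (iteratedArgmax_succ_subset F S) k.zero_le

theorem isClosed_sep_isMaxOn [TopologicalSpace E] {S : Set E} (hS : IsClosed S) {g : E → ℝ}
    (hg : Continuous g) : IsClosed {y ∈ S | IsMaxOn g S y} := by
  have h : {y ∈ S | IsMaxOn g S y} = S ∩ ⋂ z ∈ S, {y | g z ≤ g y} := by
    ext y
    simp only [mem_inter_iff, mem_iInter, isMaxOn_iff, mem_ofPred_eq]
  rw [h]
  exact hS.inter (isClosed_biInter fun z _ => isClosed_le continuous_const hg)

theorem nonempty_iInter_iteratedArgmax [TopologicalSpace E] {F : ℕ → E → ℝ}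
    (hF : ∀ k, Continuous (F k)) {S : Set E} (hS : IsCompact S) (hS_closed : IsClosed S)
    (hS_ne : S.Nonempty) : (⋂ k, iteratedArgmax F S k).Nonempty := by
  have hclosed : ∀ k, IsClosed (iteratedArgmax F S k) := fun k => by
    induction k with
    | zero => exact hS_closed
    | succ k ih => exact isClosed_sep_isMaxOn ih (hF k)
  have hne : ∀ k, (iteratedArgmax F S k).Nonempty := fun k => by
    induction k with
    | zero => exact hS_ne
    | succ k ih =>
      exact (hS.of_isClosed_subset (hclosed k) (iteratedArgmax_subset F S k)).exists_isMaxOn ih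
        (hF k).continuousOn
  exact IsCompact.nonempty_iInter_of_sequence_nonempty_isCompact_isClosed _
    (iteratedArgmax_succ_subset F S) hne hS hclosed

theorem le_of_mem_iInter_iteratedArgmax {F : ℕ → E → ℝ} {S : Set E} {y z : E} {k : ℕ}
    (hy : y ∈ ⋂ k, iteratedArgmax F S k) (hz : z ∈ iteratedArgmax F S k) : F k z ≤ F k y :=
  (mem_iInter.mp hy (k + 1)).2 hz

theorem eq_of_mem_iInter_iteratedArgmax {F : ℕ → E → ℝ} {S : Set E} {y z : E}
    (hy : y ∈ ⋂ k, iteratedArgmax F S k) (hz : z ∈ ⋂ k, iteratedArgmax F S k) (k : ℕ) :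
    F k y = F k z :=
  (le_of_mem_iInter_iteratedArgmax hz (mem_iInter.mp hy k)).antisymm
    (le_of_mem_iInter_iteratedArgmax hy (mem_iInter.mp hz k))

theorem mem_iteratedArgmax_iff {F : ℕ → E → ℝ} {S : Set E} {y : E}
    (hy : y ∈ ⋂ k, iteratedArgmax F S k) {k : ℕ} {z : E} :
    z ∈ iteratedArgmax F S k ↔ z ∈ S ∧ ∀ i < k, F i y ≤ F i z := by
  induction k with
  | zero => simp [iteratedArgmax]
  | succ k ih =>
    have hmax : z ∈ iteratedArgmax F S (k + 1) ↔
        z ∈ iteratedArgmax F S k ∧ F k y ≤ F k z :=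
      ⟨fun hz => ⟨hz.1, hz.2 (mem_iInter.mp hy k)⟩, fun hz => ⟨hz.1, fun w hw =>
        (le_of_mem_iInter_iteratedArgmax hy hw).trans hz.2⟩⟩
    rw [hmax, ih, and_assoc, Nat.forall_lt_succ_right]

theorem isClosed_image_fst_inter_snd_preimage [TopologicalSpace A] [TopologicalSpace E]
    {F : Set (A × E)} (hF : IsClosed F) {K : Set E} (hK : IsCompact K) :
    IsClosed (Prod.fst '' (F ∩ Prod.snd ⁻¹' K)) := by
  have : CompactSpace K := isCompact_iff_compactSpace.mp hK
  have himage : Prod.fst '' (F ∩ Prod.snd ⁻¹' K) =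
      Prod.fst '' ((fun z : A × K => (z.1, (z.2 : E))) ⁻¹' F) := by
    ext a
    constructor
    · rintro ⟨⟨a, y⟩, ⟨hF, hK⟩, rfl⟩
      exact ⟨(a, ⟨y, hK⟩), hF, rfl⟩
    · rintro ⟨⟨a, y⟩, hF, rfl⟩
      exact ⟨(a, y), ⟨hF, y.2⟩, rfl⟩
  rw [himage]
  exact isClosedMap_fst_of_compactSpace _ (hF.preimage (by fun_prop))

theorem isClosed_image_fst_of_locally_compact [TopologicalSpace A] [TopologicalSpace E]
    {F : Set (A × E)} (hF : IsClosed F)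
    (hloc : ∀ a, ∃ K, IsCompact K ∧ ∀ᶠ b in 𝓝 a, ∀ y, (b, y) ∈ F → y ∈ K) :
    IsClosed (Prod.fst '' F) := by
  refine isClosed_of_closure_subset fun a ha => ?_
  obtain ⟨K, hK, hFK⟩ := hloc a
  have hfreq : ∃ᶠ b in 𝓝 a, b ∈ Prod.fst '' (F ∩ Prod.snd ⁻¹' K) := by
    refine ((mem_closure_iff_frequently.mp ha).and_eventually hFK).mono ?_
    rintro _ ⟨⟨z, hz, rfl⟩, hzK⟩
    exact ⟨z, ⟨hz, hzK z.2 hz⟩, rfl⟩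
  exact image_mono inter_subset_left
    ((isClosed_image_fst_inter_snd_preimage hF hK).closure_subset
      (mem_closure_iff_frequently.mpr hfreq))

variable [TopologicalSpace A] [TopologicalSpace E]

theorem isClosed_setOf_exists_forall_le {F : ℕ → E → ℝ} (hF : ∀ k, Continuous (F k))
    {Γ : A → Set E} (hΓ : IsClosed {z : A × E | z.2 ∈ Γ z.1})
    (hloc : ∀ a, ∃ K, IsCompact K ∧ ∀ᶠ b in 𝓝 a, Γ b ⊆ K) (k : ℕ) :
    IsClosed {z : A × (ℕ → ℝ) | ∃ y ∈ Γ z.1, ∀ i ≤ k, z.2 i ≤ F i y} := by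
  let G : Set ((A × (ℕ → ℝ)) × E) :=
    {z | z.2 ∈ Γ z.1.1} ∩ ⋂ i ≤ k, {z | z.1.2 i ≤ F i z.2}
  have hG : IsClosed G := by
    refine (hΓ.preimage (f := fun z : (A × (ℕ → ℝ)) × E => (z.1.1, z.2)) (by fun_prop)).inter ?_
    exact isClosed_biInter fun i _ => isClosed_le (by fun_prop) ((hF i).comp continuous_snd)
  have himage : {z : A × (ℕ → ℝ) | ∃ y ∈ Γ z.1, ∀ i ≤ k, z.2 i ≤ F i y} = Prod.fst '' G := by
    ext z
    simp [G]
  rw [himage]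
  refine isClosed_image_fst_of_locally_compact hG fun z => ?_
  obtain ⟨K, hK, hΓK⟩ := hloc z.1
  exact ⟨K, hK, ((continuous_fst.tendsto z).eventually hΓK).mono fun _ hb _ hy => hb hy.1⟩

theorem measurable_comp_of_mem_iInter_iteratedArgmax [MeasurableSpace A] [BorelSpace A]
    {F : ℕ → E → ℝ} (hF : ∀ k, Continuous (F k))
    {Γ : A → Set E} (hΓ : IsClosed {z : A × E | z.2 ∈ Γ z.1})
    (hloc : ∀ a, ∃ K, IsCompact K ∧ ∀ᶠ b in 𝓝 a, Γ b ⊆ K)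
    {σ : A → E} (hσ : ∀ a, σ a ∈ ⋂ k, iteratedArgmax F (Γ a) k) (k : ℕ) :
    Measurable fun a => F k (σ a) := by
  induction k using Nat.strong_induction_on with
  | _ k ih =>
  refine measurable_of_Ici fun c => ?_
  -- `c ≤ F k (σ a)` iff some `y ∈ Γ a` does at least as well as `σ a` in the previous stages
  -- and has `c ≤ F k y`: a closed condition on `a` and the values of the previous stages.
  let threshold : A → A × (ℕ → ℝ) := fun a => (a, fun i => if i < k then F i (σ a) else c)
  have hthreshold : Measurable threshold := by
    refine measurable_id.prodMk (measurable_pi_lambda _ fun i => ?_)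
    split_ifs with hi
    exacts [ih i hi, measurable_const]
  have hpreimage : (fun a => F k (σ a)) ⁻¹' Ici c =
      threshold ⁻¹' {z | ∃ y ∈ Γ z.1, ∀ i ≤ k, z.2 i ≤ F i y} := by
    ext a
    constructor
    · refine fun hc => ⟨σ a, mem_iInter.mp (hσ a) 0, fun i hi => ?_⟩
      rcases hi.lt_or_eq with hlt | rfl
      · simp [threshold, hlt]
      · simpa [threshold] using hc
    · rintro ⟨y, hy, hle⟩
      have hyk : y ∈ iteratedArgmax F (Γ a) k :=
        (mem_iteratedArgmax_iff (hσ a)).mpr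
          ⟨hy, fun i hi => by simpa [threshold, hi] using hle i hi.le⟩
      have hc : c ≤ F k y := by simpa [threshold] using hle k le_rfl
      exact hc.trans (le_of_mem_iInter_iteratedArgmax (hσ a) hyk)
  rw [hpreimage]
  exact hthreshold (isClosed_setOf_exists_forall_le hF hΓ hloc k).measurableSet

end LexMaximizers

section FlowSelection

variable {τ X : Type*}

theorem exists_seq_continuous_separating (X : Type*) [MetricSpace X]
    [TopologicalSpace.SeparableSpace X] [Nonempty X] :
    ∃ c : ℕ → X → ℝ, (∀ m, Continuous (c m)) ∧ Function.Injective fun x m => c m x := by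
  refine ⟨fun m x => dist x (TopologicalSpace.denseSeq X m), fun m => by fun_prop, ?_⟩
  intro x y hxy
  have hdist : (fun z => dist x z) = fun z => dist y z :=
    (TopologicalSpace.denseRange_denseSeq X).equalizer (by fun_prop) (by fun_prop) hxy
  simpa [eq_comm] using congrFun hdist y

theorem measurable_of_measurable_separating {A X : Type*} [MeasurableSpace A]
    [TopologicalSpace X] [PolishSpace X] [MeasurableSpace X] [BorelSpace X]
    {c : ℕ → X → ℝ} (hc : ∀ m, Continuous (c m)) (hc_inj : Function.Injective fun x m => c m x)
    {g : A → X} (hg : ∀ m, Measurable fun a => c m (g a)) : Measurable g :=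
  ((continuous_pi hc).measurableEmbedding hc_inj).measurable_comp_iff.mp (measurable_pi_iff.mpr hg)

theorem measurable_eval_of_denseRange {A : Type*} [MeasurableSpace A] [TopologicalSpace τ]
    [FirstCountableTopology τ] [TopologicalSpace X] [TopologicalSpace.PseudoMetrizableSpace X]
    [MeasurableSpace X] [BorelSpace X] {q : ℕ → τ} (hq : DenseRange q) {Y : A → τ → X}
    (hY : ∀ a, Continuous (Y a)) (hYq : ∀ n, Measurable fun a => Y a (q n)) (t : τ) :
    Measurable fun a => Y a t := by
  have : (comap q (𝓝 t)).NeBot := comap_neBot_iff_frequently.mpr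
    (mem_closure_iff_frequently.mp (hq t))
  refine measurable_of_tendsto_metrizable' (comap q (𝓝 t)) hYq (tendsto_pi_nhds.mpr fun a => ?_)
  exact ((hY a).tendsto t).comp tendsto_comap

theorem exists_isCompact_forall_eventually_subset [PseudoMetricSpace X] [ProperSpace X]
    {Γ : X → Set (τ → X)} {R : ℝ} (hR : ∀ a, ∀ y ∈ Γ a, ∀ r, dist (y r) a ≤ R) (a : X) :
    ∃ K, IsCompact K ∧ ∀ᶠ b in 𝓝 a, Γ b ⊆ K := by
  refine ⟨univ.pi fun _ => Metric.closedBall a (R + 1),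
    isCompact_univ_pi fun _ => isCompact_closedBall a _, ?_⟩
  filter_upwards [Metric.closedBall_mem_nhds a one_pos] with b hb y hy r _
  exact (dist_triangle _ b _).trans (add_le_add (hR b y hy r) hb)

variable [LinearOrder τ]

/-- A family of sets `G s a` of paths started at time `s` from `a`, closed under restarting a path
at a later time and under continuing a path by another one. A path of `G s a` is extended by the
value `a` to the times before `s`. -/
structure IsSplicing (G : τ → X → Set (τ → X)) : Prop where
  eq_of_le : ∀ ⦃s a y⦄, y ∈ G s a → ∀ ⦃r⦄, r ≤ s → y r = a
  restart_mem : ∀ ⦃s t a y⦄, s ≤ t → y ∈ G s a → (fun r => y (max t r)) ∈ G t (y t)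
  piecewise_mem : ∀ ⦃s t a y z⦄, s ≤ t → y ∈ G s a → z ∈ G t (y t) →
    (Iic t).piecewise y z ∈ G s a

namespace IsSplicing

variable {G : τ → X → Set (τ → X)}

theorem sep_isMaxOn (hG : IsSplicing G) (c : X → ℝ) (q : τ) :
    IsSplicing fun s a => {y ∈ G s a | IsMaxOn (fun y => c (y q)) (G s a) y} where
  eq_of_le _ _ _ hy := hG.eq_of_le hy.1
  restart_mem s t a y hst hy := by
    refine ⟨hG.restart_mem hst hy.1, fun z hz => ?_⟩
    simp only [mem_ofPred_eq]
    rcases le_total q t with hqt | htq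
    · rw [max_eq_left hqt, hG.eq_of_le hz hqt]
    · rw [max_eq_right htq]
      have hmax := hy.2 (hG.piecewise_mem hst hy.1 hz)
      rcases htq.eq_or_lt with rfl | htq
      · rw [hG.eq_of_le hz le_rfl]
      · simpa [htq] using hmax
  piecewise_mem s t a y z hst hy hz := by
    refine ⟨hG.piecewise_mem hst hy.1 hz.1, fun w hw => ?_⟩
    have hwy : c (w q) ≤ c (y q) := hy.2 hw
    rcases le_or_gt q t with hqt | htq
    · simpa [hqt] using hwy
    · have hyz : c (y (max t q)) ≤ c (z q) := hz.2 (hG.restart_mem hst hy.1)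
      rw [max_eq_right htq.le] at hyz
      simpa [htq] using hwy.trans hyz

protected theorem iteratedArgmax (hG : IsSplicing G) (c : ℕ → X → ℝ) (q : ℕ → τ) (k : ℕ) :
    IsSplicing fun s a => iteratedArgmax (fun k y => c k (y (q k))) (G s a) k := by
  induction k with
  | zero => exact hG
  | succ k ih => exact ih.sep_isMaxOn (c k) (q k)

end IsSplicing

/-- The paths maximizing lexicographically a sequence of functionals `y ↦ c m (y q)`, with `c m`
separating points and `q` ranging over a dense set of times, are unique and stable under restart. -/
theorem IsSplicing.exists_measurable_selection [TopologicalSpace τ] [FirstCountableTopology τ]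
    [TopologicalSpace.SeparableSpace τ] [Nonempty τ] [MetricSpace X] [ProperSpace X] [Nonempty X]
    [MeasurableSpace X] [BorelSpace X] {G : τ → X → Set (τ → X)} (hG : IsSplicing G)
    (hne : ∀ s a, (G s a).Nonempty) (hclosed : ∀ s, IsClosed {z : X × (τ → X) | z.2 ∈ G s z.1})
    (hbdd : ∀ s, ∃ R, ∀ a, ∀ y ∈ G s a, ∀ r, dist (y r) a ≤ R)
    (hcont : ∀ s a, ∀ y ∈ G s a, Continuous y) :
    ∃ Y : τ → X → τ → X, (∀ s a, Y s a ∈ G s a) ∧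
      (∀ ⦃r s t⦄, r ≤ s → s ≤ t → ∀ a, Y s (Y r a s) t = Y r a t) ∧
      ∀ s t, Measurable fun a => Y s a t := by
  obtain ⟨c, hc, hc_inj⟩ := exists_seq_continuous_separating X
  set q := TopologicalSpace.denseSeq τ
  have hq : DenseRange q := TopologicalSpace.denseRange_denseSeq τ
  let F : ℕ → (τ → X) → ℝ := fun k y => c k.unpair.1 (y (q k.unpair.2))
  have hF : ∀ k, Continuous (F k) := fun k => (hc _).comp (continuous_apply _)
  have hloc : ∀ s a, ∃ K, IsCompact K ∧ ∀ᶠ b in 𝓝 a, G s b ⊆ K := fun s =>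
    (hbdd s).elim fun _ hR => exists_isCompact_forall_eventually_subset hR
  have hG_closed : ∀ s a, IsClosed (G s a) := fun s a =>
    (hclosed s).preimage (Continuous.prodMk_right a)
  have hG_compact : ∀ s a, IsCompact (G s a) := fun s a =>
    (hloc s a).elim fun _ hK => hK.1.of_isClosed_subset (hG_closed s a) hK.2.self_of_nhds
  have hexists : ∀ s a, ∃ y, y ∈ ⋂ k, iteratedArgmax F (G s a) k := fun s a =>
    nonempty_iInter_iteratedArgmax hF (hG_compact s a) (hG_closed s a) (hne s a)
  choose Y hY using hexists
  have hYG : ∀ s a, Y s a ∈ G s a := fun s a => mem_iInter.mp (hY s a) 0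
  have hunique : ∀ s a, ∀ y ∈ ⋂ k, iteratedArgmax F (G s a) k, Y s a = y := by
    intro s a y hy
    have heq_q : ∀ n, Y s a (q n) = y (q n) := fun n => hc_inj <| funext fun m => by
      simpa [F] using eq_of_mem_iInter_iteratedArgmax (hY s a) hy (Nat.pair m n)
    exact hq.equalizer (hcont s a _ (hYG s a)) (hcont s a _ (mem_iInter.mp hy 0)) (funext heq_q)
  refine ⟨Y, hYG, fun r s t hrs hst a => ?_, fun s => ?_⟩
  · have hrestart := mem_iInter.mpr fun k =>
      (hG.iteratedArgmax (fun k => c k.unpair.1) (fun k => q k.unpair.2) k).restart_mem hrs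
        (mem_iInter.mp (hY r a) k)
    simpa only [max_eq_right hst] using congrFun (hunique s _ _ hrestart) t
  · have hmeas := measurable_comp_of_mem_iInter_iteratedArgmax hF (hclosed s) (hloc s) (hY s)
    refine measurable_eval_of_denseRange hq (fun a => hcont s a _ (hYG s a)) fun n => ?_
    exact measurable_of_measurable_separating hc hc_inj fun m => by
      simpa [F] using hmeas (Nat.pair m n)

end FlowSelection

namespace IsRemainder

variable {κ : ℝ} {ϖ : ℝ → ℝ}

theorem mono (hϖ : IsRemainder κ ϖ) {x y : ℝ} (hx : 0 ≤ x) (hxy : x ≤ y) : ϖ x ≤ ϖ y :=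
  hϖ.strictMonoOn.monotoneOn hx (hx.trans hxy) hxy

theorem apply_pos (hϖ : IsRemainder κ ϖ) {x : ℝ} (hx : 0 < x) : 0 < ϖ x :=
  (hϖ.nonneg 0 le_rfl).trans_lt (hϖ.strictMonoOn self_mem_Ici hx.le hx)

theorem pos (hϖ : IsRemainder κ ϖ) : 0 < κ := by
  have hhalf : 0 < 2 * ϖ (1 / 2) := mul_pos two_pos (hϖ.apply_pos (by norm_num))
  exact pos_of_mul_pos_left (hhalf.trans_le (hϖ.doubling 1 one_pos)) (hϖ.nonneg 1 zero_le_one)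

theorem map_zero (hϖ : IsRemainder κ ϖ) (hκ : κ < 2) : ϖ 0 = 0 := by
  have hlim : Tendsto ϖ (𝓝[>] 0) (𝓝 (ϖ 0)) :=
    (hϖ.contOn 0 self_mem_Ici).tendsto.mono_left (nhdsWithin_mono _ Ioi_subset_Ici_self)
  have hhalf : Tendsto (fun x : ℝ => x / 2) (𝓝[>] 0) (𝓝[>] 0) := by
    refine tendsto_nhdsWithin_iff.mpr ⟨?_, ?_⟩
    · simpa using ((continuous_id.div_const 2).tendsto (0 : ℝ)).mono_left nhdsWithin_le_nhds
    · filter_upwards [self_mem_nhdsWithin] with x hx using half_pos (mem_Ioi.mp hx)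
  have hle : 2 * ϖ 0 ≤ κ * ϖ 0 := by
    refine le_of_tendsto_of_tendsto ((hlim.comp hhalf).const_mul 2) (hlim.const_mul κ) ?_
    filter_upwards [self_mem_nhdsWithin] with x hx using hϖ.doubling x hx
  nlinarith [hϖ.nonneg 0 le_rfl]

theorem apply_le_of_le_half (hϖ : IsRemainder κ ϖ) (hκ : κ < 2) {x y : ℝ} (hx : 0 ≤ x)
    (hxy : x ≤ y / 2) : ϖ x ≤ κ / 2 * ϖ y := by
  rcases (by linarith : 0 ≤ y).eq_or_lt with rfl | hy
  · simp [le_antisymm (by simpa using hxy) hx, hϖ.map_zero hκ]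
  · linarith [hϖ.mono hx hxy, hϖ.doubling y hy]

theorem exists_apply_lt (hϖ : IsRemainder κ ϖ) (hκ : κ < 2) {ε : ℝ} (hε : 0 < ε) :
    ∃ η > 0, ∀ ⦃x⦄, 0 ≤ x → x < η → ϖ x < ε := by
  have hlim : Tendsto ϖ (𝓝[≥] 0) (𝓝 0) := by
    simpa only [hϖ.map_zero hκ] using (hϖ.contOn 0 self_mem_Ici).tendsto
  obtain ⟨η, hη, hlt⟩ := mem_nhdsGE_iff_exists_Ico_subset.mp (hlim.eventually_lt_const hε)
  exact ⟨η, hη, fun x hx hxη => hlt ⟨hx, hxη⟩⟩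

end IsRemainder

theorem isRemainder_rpow {θ : ℝ} (hθ : 0 < θ) :
    IsRemainder (2 ^ (1 - θ)) fun x => x ^ θ where
  contOn := (Real.continuous_rpow_const hθ.le).continuousOn
  strictMonoOn := Real.strictMonoOn_rpow_Ici_of_exponent_pos hθ
  nonneg _ hx := Real.rpow_nonneg hx θ
  doubling x hx := by
    rw [Real.div_rpow hx.le two_pos.le, Real.rpow_sub two_pos, Real.rpow_one, mul_div_left_comm,
      mul_comm, div_mul_eq_mul_div]

namespace IsControl

variable {T : ℝ} {ω : ℝ → ℝ → ℝ}

theorem restrict {S : ℝ} (hω : IsControl S ω) (hTS : T ≤ S) : IsControl T ω where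
  nonneg _ _ hs hst htT := hω.nonneg hs hst (htT.trans hTS)
  superadd _ _ _ hr hrs hst htT := hω.superadd hr hrs hst (htT.trans hTS)
  diag _ hs hsT := hω.diag hs (hsT.trans hTS)
  small ε hε :=
    (hω.small ε hε).imp fun _ hh => ⟨hh.1, fun _ _ hs hst htT => hh.2 hs hst (htT.trans hTS)⟩

theorem mono (hω : IsControl T ω) {s u v t : ℝ} (hs : 0 ≤ s) (hsu : s ≤ u) (huv : u ≤ v)
    (hvt : v ≤ t) (htT : t ≤ T) : ω u v ≤ ω s t := by
  have hsv := hω.superadd hs hsu huv (hvt.trans htT)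
  have hst := hω.superadd hs (hsu.trans huv) hvt htT
  have hsu_nonneg := hω.nonneg hs hsu (huv.trans (hvt.trans htT))
  have hvt_nonneg := hω.nonneg (hs.trans (hsu.trans huv)) hvt htT
  linarith

theorem exists_remainder_lt (hω : IsControl T ω) {κ : ℝ} {ϖ : ℝ → ℝ} (hϖ : IsRemainder κ ϖ)
    (hκ : κ < 2) {ε : ℝ} (hε : 0 < ε) :
    ∃ h > 0, ∀ ⦃s t : ℝ⦄, 0 ≤ s → s ≤ t → t ≤ T → t - s ≤ h → ϖ (ω s t) < ε := by
  obtain ⟨η, hη, hϖ_lt⟩ := hϖ.exists_apply_lt hκ hε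
  obtain ⟨h, hh, hω_lt⟩ := hω.small η hη
  exact ⟨h, hh, fun s t hs hst htT hsth =>
    hϖ_lt (hω.nonneg hs hst htT) (hω_lt hs hst htT hsth)⟩

theorem exists_consecutive_le_half (hω : IsControl T ω) {D : Finset (Icc 0 T)} {r t : Icc 0 T}
    (hr : r ∈ D) (ht : t ∈ D) (hrt : r < t) :
    ∃ u ∈ D, ∃ v ∈ D, r ≤ u ∧ u < v ∧ v ≤ t ∧ (∀ w ∈ D, w ≤ u ∨ v ≤ w) ∧
      ω r u ≤ ω r t / 2 ∧ ω v t ≤ ω r t / 2 := by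
  have hhalf_nonneg : 0 ≤ ω r t / 2 :=
    div_nonneg (hω.nonneg r.2.1 hrt.le t.2.2) zero_le_two
  obtain ⟨u, hu, hu_max⟩ := (D.filter fun w => r ≤ w ∧ w < t ∧ ω r w ≤ ω r t / 2).exists_max_image
    id ⟨r, by simp [hr, hrt, hω.diag r.2.1 r.2.2, hhalf_nonneg]⟩
  obtain ⟨huD, hru, hut, hωu⟩ := Finset.mem_filter.mp hu
  obtain ⟨v, hv, hv_min⟩ := (D.filter (u < ·)).exists_min_image id ⟨t, by simp [ht, hut]⟩
  obtain ⟨hvD, huv⟩ := Finset.mem_filter.mp hv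
  have hvt : v ≤ t := hv_min t (by simp [ht, hut])
  refine ⟨u, huD, v, hvD, hru, huv, hvt, fun w hw => ?_, hωu, ?_⟩
  · exact (le_or_gt w u).imp_right fun huw => hv_min w (by simp [hw, huw])
  · rcases hvt.eq_or_lt with rfl | hvt
    · simpa [hω.diag v.2.1 v.2.2] using hhalf_nonneg
    · have hωv : ω r t / 2 < ω r v := by
        by_contra! hle
        exact huv.not_ge (hu_max v (by simp [hvD, hru.trans huv.le, hvt, hle]))
      linarith [hω.superadd r.2.1 (hru.trans huv.le) hvt.le t.2.2]

theorem exists_near_le_half (hω : IsControl T ω) {h : ℝ} (hh : 0 < h) {r t : Icc 0 T}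
    (hrt : r ≤ t) :
    ∃ u v : Icc 0 T, r ≤ u ∧ u ≤ v ∧ v ≤ t ∧ (v : ℝ) - u ≤ h ∧
      ω r u ≤ ω r t / 2 ∧ ω v t ≤ ω r t / 2 := by
  rcases hrt.eq_or_lt with rfl | hrt
  · exact ⟨r, r, le_rfl, le_rfl, le_rfl, by simpa using hh.le, by simp [hω.diag r.2.1 r.2.2]⟩
  obtain ⟨N, -, hN, hcover⟩ := finite_cover_balls_of_compact (isCompact_univ (X := Icc 0 T))
    (half_pos hh)
  obtain ⟨u, -, v, -, hru, huv, hvt, hgap, hωu, hωv⟩ := hω.exists_consecutive_le_half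
    (D := insert r (insert t hN.toFinset)) (by simp) (by simp) hrt
  refine ⟨u, v, hru, huv.le, hvt, ?_, hωu, hωv⟩
  by_contra! hlarge
  have : (u : ℝ) < v := huv
  let m : Icc 0 T := ⟨(u + v) / 2, by linarith [u.2.1, v.2.1], by linarith [u.2.2, v.2.2]⟩
  obtain ⟨w, hw, hmw⟩ := mem_iUnion₂.mp (hcover (mem_univ m))
  have hmw : |((u : ℝ) + v) / 2 - w| < h / 2 := hmw
  rw [abs_lt] at hmw
  rcases hgap w (by simp [hw]) with hwu | hvw
  · linarith [show (w : ℝ) ≤ u from hwu]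
  · linarith [show (v : ℝ) ≤ w from hvw]

end IsControl

section AlmostFlow

variable {T : ℝ} {X : Type*} {ω : ℝ → ℝ → ℝ} {ϖ : ℝ → ℝ} {κ δ C : ℝ} {s : Icc 0 T} {a : X}

/-- An almost flow on `X` over the times `[0, T]`: maps `φ t s : X → X`, considered for `s ≤ t`,
which have Lipschitz constant `1 + δ`, move points little, and satisfy the flow property up to
`C * ϖ (ω r t)`. The control `ω` and the remainder `ϖ` are part of the notion, as is the smallness
condition `(1 + δ / 2) * κ < 1` that allows sewing. -/
structure IsAlmostFlow [PseudoMetricSpace X] (ω : ℝ → ℝ → ℝ) (ϖ : ℝ → ℝ) (κ δ C : ℝ)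
    (φ : Icc 0 T → Icc 0 T → X → X) : Prop where
  isControl : IsControl T ω
  isRemainder : IsRemainder κ ϖ
  delta_nonneg : 0 ≤ δ
  defect_nonneg : 0 ≤ C
  rate_lt_one : (1 + δ / 2) * κ < 1
  map_self : ∀ t a, φ t t a = a
  dist_map_le : ∀ ⦃s t : Icc 0 T⦄, s ≤ t → ∀ a b, dist (φ t s a) (φ t s b) ≤ (1 + δ) * dist a b
  dist_comp_le : ∀ ⦃r s t : Icc 0 T⦄, r ≤ s → s ≤ t → ∀ a,
    dist (φ t s (φ s r a)) (φ t r a) ≤ C * ϖ (ω r t)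
  bounded : ∃ R, ∀ ⦃s t : Icc 0 T⦄, s ≤ t → ∀ a, dist (φ t s a) a ≤ R
  small : ∀ ε > 0, ∃ h > 0, ∀ ⦃s t : Icc 0 T⦄, s ≤ t → (t : ℝ) - s ≤ h →
    ∀ a, dist (φ t s a) a < ε

/-- The solutions in the sense of Davie, with constant `K`, started from `a` at time `s`. They are
extended by the value `a` to the times before `s`. -/
def davieSolutions [PseudoMetricSpace X] (ω : ℝ → ℝ → ℝ) (ϖ : ℝ → ℝ)
    (φ : Icc 0 T → Icc 0 T → X → X) (K : ℝ) (s : Icc 0 T) (a : X) : Set (Icc 0 T → X) :=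
  {y | (∀ r ≤ s, y r = a) ∧
    ∀ r t, s ≤ r → r ≤ t → dist (y t) (φ t r (y r)) ≤ K * ϖ (ω r t)}

/-- The constant of the sewing estimate, the fixed point of `K ↦ (1 + δ / 2) * κ * K + 2 * C`. -/
def sewingConst (κ δ C : ℝ) : ℝ :=
  2 * C / (1 - (1 + δ / 2) * κ)

theorem exists_eulerPath {τ : Type*} [LinearOrder τ] (φ : τ → τ → X → X) (s : τ) (a : X)
    (D : Finset τ) : ∃ y : τ → X, (∀ r ≤ s, y r = a) ∧
      ∀ u ∈ D, ∀ v ∈ D, s ≤ u → u < v → (∀ w ∈ D, w ≤ u ∨ v ≤ w) → y v = φ v u (y u) := by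
  induction D using Finset.induction_on_max with
  | empty => exact ⟨fun _ => a, by simp⟩
  | insert m D hm ih =>
    obtain ⟨y, hya, hy⟩ := ih
    by_cases hs : (D.filter (s ≤ ·)).Nonempty
    · obtain ⟨M, hM, hM_max⟩ := (D.filter (s ≤ ·)).exists_max_image id hs
      obtain ⟨hMD, hsM⟩ := Finset.mem_filter.mp hM
      refine ⟨Function.update y m (φ m M (y M)), fun r hr => ?_, ?_⟩
      · rw [Function.update_of_ne ((hr.trans hsM).trans_lt (hm M hMD)).ne, hya r hr]
      intro u hu v hv hsu huv hgap
      have hum : u < m := by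
        rcases Finset.mem_insert.mp hv with rfl | hv
        exacts [huv, huv.trans (hm v hv)]
      have huD : u ∈ D := Finset.mem_of_mem_insert_of_ne hu hum.ne
      rw [Function.update_of_ne hum.ne]
      rcases Finset.mem_insert.mp hv with rfl | hvD
      · have hMu : M ≤ u := (hgap M (by simp [hMD])).resolve_right (hm M hMD).not_ge
        have huM : u = M := le_antisymm (hM_max u (by simp [huD, hsu])) hMu
        rw [Function.update_self, huM]
      · rw [Function.update_of_ne (hm v hvD).ne]
        exact hy u huD v hvD hsu huv fun w hw => hgap w (Finset.mem_insert_of_mem hw)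
    · refine ⟨y, hya, fun u hu v hv hsu huv _ => ?_⟩
      have huD : u ∉ D := fun hu => hs ⟨u, by simp [hu, hsu]⟩
      have hvD : v ∉ D := fun hv => hs ⟨v, by simp [hv, hsu.trans huv.le]⟩
      simp only [Finset.mem_insert, huD, hvD, or_false] at hu hv
      exact absurd (hu.trans hv.symm) huv.ne

section PseudoMetric

variable [PseudoMetricSpace X] {φ : Icc 0 T → Icc 0 T → X → X} {y : Icc 0 T → X} {K : ℝ}

namespace IsAlmostFlow

theorem remainder_nonneg (hφ : IsAlmostFlow ω ϖ κ δ C φ) {r t : Icc 0 T} (hrt : r ≤ t) :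
    0 ≤ ϖ (ω r t) :=
  hφ.isRemainder.nonneg _ (hφ.isControl.nonneg r.2.1 hrt t.2.2)

theorem remainder_mono (hφ : IsAlmostFlow ω ϖ κ δ C φ) {r u v t : Icc 0 T} (hru : r ≤ u)
    (huv : u ≤ v) (hvt : v ≤ t) : ϖ (ω u v) ≤ ϖ (ω r t) :=
  hφ.isRemainder.mono (hφ.isControl.nonneg u.2.1 huv v.2.2)
    (hφ.isControl.mono r.2.1 hru huv hvt t.2.2)

theorem kappa_lt_two (hφ : IsAlmostFlow ω ϖ κ δ C φ) : κ < 2 := by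
  nlinarith [hφ.rate_lt_one, mul_nonneg hφ.delta_nonneg hφ.isRemainder.pos.le]

theorem rate_nonneg (hφ : IsAlmostFlow ω ϖ κ δ C φ) : 0 ≤ (1 + δ / 2) * κ := by
  have := hφ.delta_nonneg
  have := hφ.isRemainder.pos
  positivity

theorem sewingConst_nonneg (hφ : IsAlmostFlow ω ϖ κ δ C φ) : 0 ≤ sewingConst κ δ C :=
  div_nonneg (mul_nonneg zero_le_two hφ.defect_nonneg) (sub_nonneg.mpr hφ.rate_lt_one.le)

theorem sewingConst_eq (hφ : IsAlmostFlow ω ϖ κ δ C φ) :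
    (1 + δ / 2) * κ * sewingConst κ δ C + 2 * C = sewingConst κ δ C := by
  have : sewingConst κ δ C * (1 - (1 + δ / 2) * κ) = 2 * C :=
    div_mul_cancel₀ _ (sub_pos.mpr hφ.rate_lt_one).ne'
  linarith

theorem dist_le_of_le_half (hφ : IsAlmostFlow ω ϖ κ δ C φ) (hK : 0 ≤ K) {η : ℝ}
    {r u v t : Icc 0 T} (hru : r ≤ u) (huv : u ≤ v) (hvt : v ≤ t)
    (hωu : ω r u ≤ ω r t / 2) (hωv : ω v t ≤ ω r t / 2)
    (hyu : dist (y u) (φ u r (y r)) ≤ K * ϖ (ω r u)) (hyv : dist (y v) (φ v u (y u)) ≤ η)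
    (hyt : dist (y t) (φ t v (y v)) ≤ K * ϖ (ω v t)) :
    dist (y t) (φ t r (y r)) ≤ ((1 + δ / 2) * κ * K + 2 * C) * ϖ (ω r t) + (1 + δ) * η := by
  have hut := huv.trans hvt
  have hδ : 0 ≤ 1 + δ := by linarith [hφ.delta_nonneg]
  have hC := hφ.defect_nonneg
  have hϖu : ϖ (ω r u) ≤ κ / 2 * ϖ (ω r t) := hφ.isRemainder.apply_le_of_le_half
    hφ.kappa_lt_two (hφ.isControl.nonneg r.2.1 hru u.2.2) hωu
  have hϖv : ϖ (ω v t) ≤ κ / 2 * ϖ (ω r t) := hφ.isRemainder.apply_le_of_le_half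
    hφ.kappa_lt_two (hφ.isControl.nonneg v.2.1 hvt t.2.2) hωv
  have hv : dist (φ t v (y v)) (φ t v (φ v u (y u))) ≤ (1 + δ) * η :=
    (hφ.dist_map_le hvt _ _).trans (by gcongr)
  have hvu : dist (φ t v (φ v u (y u))) (φ t u (y u)) ≤ C * ϖ (ω r t) :=
    (hφ.dist_comp_le huv hvt _).trans (by gcongr; exact hφ.remainder_mono hru hut le_rfl)
  have hu : dist (φ t u (y u)) (φ t u (φ u r (y r))) ≤ (1 + δ) * (K * (κ / 2 * ϖ (ω r t))) :=
    (hφ.dist_map_le hut _ _).trans (by gcongr; exact hyu.trans (by gcongr))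
  have hur := hφ.dist_comp_le hru hut (y r)
  have htu := dist_triangle4 (y t) (φ t v (y v)) (φ t v (φ v u (y u))) (φ t u (y u))
  have htr := dist_triangle4 (y t) (φ t u (y u)) (φ t u (φ u r (y r))) (φ t r (y r))
  linarith [mul_le_mul_of_nonneg_left hϖv hK]

theorem dist_le_of_eulerPath (hφ : IsAlmostFlow ω ϖ κ δ C φ) {D : Finset (Icc 0 T)}
    (hy : ∀ u ∈ D, ∀ v ∈ D, s ≤ u → u < v → (∀ w ∈ D, w ≤ u ∨ v ≤ w) → y v = φ v u (y u))
    {r t : Icc 0 T} (hr : r ∈ D) (ht : t ∈ D) (hsr : s ≤ r) (hrt : r ≤ t) :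
    dist (y t) (φ t r (y r)) ≤ sewingConst κ δ C * ϖ (ω r t) := by
  induction hn : (D.filter fun w => r ≤ w ∧ w ≤ t).card using Nat.strong_induction_on
    generalizing r t with
  | _ n ih =>
  rcases hrt.eq_or_lt with rfl | hrt_lt
  · simpa [hφ.map_self] using mul_nonneg hφ.sewingConst_nonneg (hφ.remainder_nonneg le_rfl)
  obtain ⟨u, hu, v, hv, hru, huv, hvt, hgap, hωu, hωv⟩ :=
    hφ.isControl.exists_consecutive_le_half hr ht hrt_lt
  have hcard_u : (D.filter fun w => r ≤ w ∧ w ≤ u).card < n := hn ▸ Finset.card_lt_card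
    ((Finset.ssubset_iff_of_subset (Finset.monotone_filter_right D
      fun w _ hw => ⟨hw.1, hw.2.trans (huv.le.trans hvt)⟩)).mpr
      ⟨t, by simp [ht, hrt], by simp [huv.trans_le hvt]⟩)
  have hcard_v : (D.filter fun w => v ≤ w ∧ w ≤ t).card < n := hn ▸ Finset.card_lt_card
    ((Finset.ssubset_iff_of_subset (Finset.monotone_filter_right D
      fun w _ hw => ⟨hru.trans (huv.le.trans hw.1), hw.2⟩)).mpr
      ⟨r, by simp [hr, hrt], by simp [hru.trans_lt huv]⟩)
  have hyu := ih _ hcard_u hr hu hsr hru rfl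
  have hyt := ih _ hcard_v hv ht (hsr.trans (hru.trans huv.le)) hvt rfl
  have hyv : dist (y v) (φ v u (y u)) ≤ 0 := by
    rw [hy u hu v hv (hsr.trans hru) huv hgap, dist_self]
  simpa [hφ.sewingConst_eq] using
    hφ.dist_le_of_le_half hφ.sewingConst_nonneg hru huv.le hvt hωu hωv hyu hyv hyt

protected theorem continuous (hφ : IsAlmostFlow ω ϖ κ δ C φ) {r t : Icc 0 T} (hrt : r ≤ t) :
    Continuous (φ t r) :=
  (LipschitzWith.of_dist_le' (hφ.dist_map_le hrt)).continuous

theorem davieSolutions_mono (hφ : IsAlmostFlow ω ϖ κ δ C φ) {K' : ℝ} (hK : K ≤ K') :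
    davieSolutions ω ϖ φ K s a ⊆ davieSolutions ω ϖ φ K' s a :=
  fun _ hy => ⟨hy.1, fun r t hsr hrt => (hy.2 r t hsr hrt).trans
    (mul_le_mul_of_nonneg_right hK (hφ.remainder_nonneg hrt))⟩

theorem davieSolutions_subset_contract (hφ : IsAlmostFlow ω ϖ κ δ C φ) (hK : 0 ≤ K) :
    davieSolutions ω ϖ φ K s a ⊆ davieSolutions ω ϖ φ ((1 + δ / 2) * κ * K + 2 * C) s a := by
  refine fun y hy => ⟨hy.1, fun r t hsr hrt => le_of_forall_pos_le_add fun ε hε => ?_⟩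
  have hδ : 0 < 1 + δ := by linarith [hφ.delta_nonneg]
  obtain ⟨h, hh, hϖ_lt⟩ := hφ.isControl.exists_remainder_lt hφ.isRemainder hφ.kappa_lt_two
    (show 0 < ε / (1 + δ) / (K + 1) by positivity)
  obtain ⟨u, v, hru, huv, hvt, huvh, hωu, hωv⟩ := hφ.isControl.exists_near_le_half hh hrt
  have hsu := hsr.trans hru
  have hϖuv := hϖ_lt u.2.1 huv v.2.2 huvh
  have hyv : dist (y v) (φ v u (y u)) ≤ ε / (1 + δ) := by
    refine (hy.2 u v hsu huv).trans ?_
    rw [lt_div_iff₀ (by positivity)] at hϖuv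
    linarith [hφ.remainder_nonneg huv]
  have hle := hφ.dist_le_of_le_half hK hru huv hvt hωu hωv (hy.2 r u hsr hru) hyv
    (hy.2 v t (hsu.trans huv) hvt)
  rwa [mul_div_cancel₀ _ hδ.ne'] at hle

theorem davieSolutions_subset_sewingConst (hφ : IsAlmostFlow ω ϖ κ δ C φ) :
    davieSolutions ω ϖ φ K s a ⊆ davieSolutions ω ϖ φ (sewingConst κ δ C) s a := by
  intro y hy
  set L := sewingConst κ δ C
  set ρ := (1 + δ / 2) * κ
  set M := max K L
  have hML : 0 ≤ M - L := sub_nonneg.mpr (le_max_right K L)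
  have hiterate : ∀ n : ℕ, y ∈ davieSolutions ω ϖ φ (ρ ^ n * (M - L) + L) s a := fun n => by
    induction n with
    | zero => simpa using hφ.davieSolutions_mono (le_max_left K L) hy
    | succ n ih =>
      have hnonneg : 0 ≤ ρ ^ n * (M - L) + L :=
        add_nonneg (mul_nonneg (pow_nonneg hφ.rate_nonneg n) hML) hφ.sewingConst_nonneg
      have hK : ρ * (ρ ^ n * (M - L) + L) + 2 * C = ρ ^ (n + 1) * (M - L) + L := by
        linear_combination hφ.sewingConst_eq
      exact hK ▸ hφ.davieSolutions_subset_contract hnonneg ih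
  have hlim : Tendsto (fun n : ℕ => ρ ^ n * (M - L) + L) atTop (𝓝 L) := by
    simpa using ((tendsto_pow_atTop_nhds_zero_of_lt_one hφ.rate_nonneg hφ.rate_lt_one).mul_const
      (M - L)).add_const L
  exact ⟨hy.1, fun r t hsr hrt => ge_of_tendsto' (hlim.mul_const _)
    fun n => (hiterate n).2 r t hsr hrt⟩

theorem piecewise_mem_davieSolutions (hφ : IsAlmostFlow ω ϖ κ δ C φ) (hK : 0 ≤ K) {t : Icc 0 T}
    {z : Icc 0 T → X} (hst : s ≤ t) (hy : y ∈ davieSolutions ω ϖ φ K s a)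
    (hz : z ∈ davieSolutions ω ϖ φ K t (y t)) :
    (Iic t).piecewise y z ∈ davieSolutions ω ϖ φ ((2 + δ) * K + C) s a := by
  have hδ := hφ.delta_nonneg
  have hC := hφ.defect_nonneg
  have hKle : K ≤ (2 + δ) * K + C := by nlinarith
  have hy' := hφ.davieSolutions_mono hKle hy
  have hz' := hφ.davieSolutions_mono hKle hz
  refine ⟨fun r hr => by simp [hr.trans hst, hy.1 r hr], fun r v hsr hrv => ?_⟩
  rcases le_or_gt v t with hvt | htv
  · simpa [hvt, hrv.trans hvt] using hy'.2 r v hsr hrv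
  rcases lt_or_ge t r with htr | hrt
  · simpa [htv.not_ge, htr.not_ge] using hz'.2 r v htr.le hrv
  rw [piecewise_eq_of_notMem _ _ _ (notMem_Iic.mpr htv),
    piecewise_eq_of_mem _ _ _ (mem_Iic.mpr hrt)]
  have hzv : dist (z v) (φ v t (y t)) ≤ K * ϖ (ω r v) := by
    have h := hz.2 t v le_rfl htv.le
    rw [hz.1 t le_rfl] at h
    exact h.trans (mul_le_mul_of_nonneg_left (hφ.remainder_mono hrt htv.le le_rfl) hK)
  have hyt : dist (φ v t (y t)) (φ v t (φ t r (y r))) ≤ (1 + δ) * (K * ϖ (ω r v)) := by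
    refine (hφ.dist_map_le htv.le _ _).trans ?_
    gcongr
    exact (hy.2 r t hsr hrt).trans
      (mul_le_mul_of_nonneg_left (hφ.remainder_mono le_rfl hrt htv.le) hK)
  have hcomp := hφ.dist_comp_le hrt htv.le (y r)
  linarith [dist_triangle4 (z v) (φ v t (y t)) (φ v t (φ t r (y r))) (φ v r (y r))]

theorem isSplicing_davieSolutions (hφ : IsAlmostFlow ω ϖ κ δ C φ) :
    IsSplicing (davieSolutions ω ϖ φ (sewingConst κ δ C)) where
  eq_of_le _ _ _ hy := hy.1
  restart_mem s t a y hst hy := by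
    refine ⟨fun r hr => by simp only [max_eq_left hr], fun r v htr hrv => ?_⟩
    simpa only [max_eq_right htr, max_eq_right (htr.trans hrv)] using hy.2 r v (hst.trans htr) hrv
  piecewise_mem _ _ _ _ _ hst hy hz := hφ.davieSolutions_subset_sewingConst
    (hφ.piecewise_mem_davieSolutions hφ.sewingConst_nonneg hst hy hz)

theorem exists_dist_le_of_mem_davieSolutions (hφ : IsAlmostFlow ω ϖ κ δ C φ) (hK : 0 ≤ K)
    (s : Icc 0 T) : ∃ R, ∀ a, ∀ y ∈ davieSolutions ω ϖ φ K s a, ∀ r, dist (y r) a ≤ R := by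
  obtain ⟨R, hR⟩ := hφ.bounded
  let t : Icc 0 T := ⟨T, s.2.1.trans s.2.2, le_rfl⟩
  refine ⟨K * ϖ (ω s t) + R, fun a y hy r => ?_⟩
  suffices h : ∀ r, s ≤ r → dist (y r) a ≤ K * ϖ (ω s t) + R by
    rcases le_total r s with hrs | hsr
    · simpa only [hy.1 r hrs, hy.1 s le_rfl] using h s le_rfl
    · exact h r hsr
  intro r hsr
  have hyr := hy.2 s r le_rfl hsr
  rw [hy.1 s le_rfl] at hyr
  exact (dist_triangle _ (φ r s a) _).trans (add_le_add (hyr.trans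
    (mul_le_mul_of_nonneg_left (hφ.remainder_mono le_rfl hsr r.2.2) hK)) (hR hsr a))

theorem exists_dist_lt_of_mem_davieSolutions (hφ : IsAlmostFlow ω ϖ κ δ C φ) (hK : 0 ≤ K)
    (hy : y ∈ davieSolutions ω ϖ φ K s a) {ε : ℝ} (hε : 0 < ε) :
    ∃ h > 0, ∀ ⦃r t : Icc 0 T⦄, r ≤ t → (t : ℝ) - r ≤ h → dist (y t) (y r) < ε := by
  obtain ⟨h₁, hh₁, hϖ_lt⟩ := hφ.isControl.exists_remainder_lt hφ.isRemainder hφ.kappa_lt_two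
    (show 0 < ε / 2 / (K + 1) by positivity)
  obtain ⟨h₂, hh₂, hφ_lt⟩ := hφ.small (ε / 2) (half_pos hε)
  have hclose : ∀ ⦃r t : Icc 0 T⦄, s ≤ r → r ≤ t → (t : ℝ) - r ≤ min h₁ h₂ →
      dist (y t) (y r) < ε := by
    intro r t hsr hrt hgap
    have hϖrt := hϖ_lt r.2.1 hrt t.2.2 (hgap.trans (min_le_left _ _))
    rw [lt_div_iff₀ (by positivity)] at hϖrt
    linarith [dist_triangle (y t) (φ t r (y r)) (y r), hy.2 r t hsr hrt,
      hφ_lt hrt (hgap.trans (min_le_right _ _)) (y r), hφ.remainder_nonneg hrt]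
  refine ⟨min h₁ h₂, lt_min hh₁ hh₂, fun r t hrt hgap => ?_⟩
  rcases le_total s r with hsr | hrs
  · exact hclose hsr hrt hgap
  rw [hy.1 r hrs, ← hy.1 s le_rfl]
  rcases le_total s t with hst | hts
  · exact hclose le_rfl hst ((sub_le_sub_left (Subtype.coe_le_coe.mpr hrs) _).trans hgap)
  · rwa [hy.1 t hts, hy.1 s le_rfl, dist_self]

theorem continuous_of_mem_davieSolutions (hφ : IsAlmostFlow ω ϖ κ δ C φ) (hK : 0 ≤ K)
    (hy : y ∈ davieSolutions ω ϖ φ K s a) : Continuous y := by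
  refine Metric.continuous_iff.mpr fun r ε hε => ?_
  obtain ⟨h, hh, hlt⟩ := hφ.exists_dist_lt_of_mem_davieSolutions hK hy hε
  refine ⟨h, hh, fun t htr => ?_⟩
  rw [Subtype.dist_eq, Real.dist_eq, abs_lt] at htr
  rcases le_total r t with hrt | hle
  · exact hlt hrt htr.2.le
  · rw [dist_comm]
    exact hlt hle (by linarith)

end IsAlmostFlow

end PseudoMetric

namespace IsAlmostFlow

variable [MetricSpace X] {φ : Icc 0 T → Icc 0 T → X → X}

theorem isClosed_davieSolutions (hφ : IsAlmostFlow ω ϖ κ δ C φ) (K : ℝ) (s : Icc 0 T) :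
    IsClosed {z : X × (Icc 0 T → X) | z.2 ∈ davieSolutions ω ϖ φ K s z.1} := by
  have heq : {z : X × (Icc 0 T → X) | z.2 ∈ davieSolutions ω ϖ φ K s z.1} =
      (⋂ r ≤ s, {z | z.2 r = z.1}) ∩
        ⋂ r, ⋂ t, ⋂ (_ : s ≤ r) (_ : r ≤ t),
          {z | dist (z.2 t) (φ t r (z.2 r)) ≤ K * ϖ (ω r t)} := by
    ext z
    simp only [davieSolutions, mem_inter_iff, mem_iInter, mem_ofPred_eq]
  rw [heq]
  refine (isClosed_biInter fun r _ => isClosed_eq (by fun_prop) continuous_fst).inter ?_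
  refine isClosed_iInter fun r => isClosed_iInter fun t => isClosed_iInter fun _ =>
    isClosed_iInter fun hrt => ?_
  have := hφ.continuous hrt
  exact isClosed_le (by fun_prop) continuous_const

theorem nonempty_davieSolutions [ProperSpace X] (hφ : IsAlmostFlow ω ϖ κ δ C φ) (s : Icc 0 T)
    (a : X) : (davieSolutions ω ϖ φ (sewingConst κ δ C) s a).Nonempty := by
  choose y hya hy using exists_eulerPath φ s a
  have hdavie : ∀ r t, s ≤ r → r ≤ t →
      ∀ᶠ D in atTop, dist (y D t) (φ t r (y D r)) ≤ sewingConst κ δ C * ϖ (ω r t) := by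
    intro r t hsr hrt
    filter_upwards [eventually_ge_atTop {r, t}] with D hD
    exact hφ.dist_le_of_eulerPath (hy D) (hD (by simp)) (hD (by simp)) hsr hrt
  have hbdd : ∀ r, ∃ ρ, ∀ᶠ D in atTop, y D r ∈ Metric.closedBall a ρ := by
    intro r
    rcases le_total r s with hrs | hsr
    · exact ⟨0, .of_forall fun D => by simp [hya D r hrs]⟩
    · refine ⟨sewingConst κ δ C * ϖ (ω s r) + dist (φ r s a) a, ?_⟩
      filter_upwards [hdavie s r le_rfl hsr] with D hD
      rw [hya D s le_rfl] at hD
      exact (dist_triangle _ (φ r s a) _).trans (add_le_add_left hD _)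
  let U : Ultrafilter (Finset (Icc 0 T)) := Ultrafilter.of atTop
  have hU : (U : Filter (Finset (Icc 0 T))) ≤ atTop := Ultrafilter.of_le atTop
  have hlim : ∀ r, ∃ z, Tendsto (fun D => y D r) U (𝓝 z) := fun r => by
    obtain ⟨ρ, hρ⟩ := hbdd r
    obtain ⟨z, -, hz⟩ := (isCompact_closedBall a ρ).ultrafilter_le_nhds (U.map fun D => y D r)
      (le_principal_iff.mpr (hU hρ))
    exact ⟨z, hz⟩
  choose z hz using hlim
  refine ⟨z, fun r hrs => tendsto_nhds_unique (hz r) ?_, fun r t hsr hrt => ?_⟩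
  · simp only [hya _ r hrs, tendsto_const_nhds]
  · exact le_of_tendsto ((hz t).dist (((hφ.continuous hrt).tendsto _).comp (hz r)))
      (hU (hdavie r t hsr hrt))

theorem exists_measurable_flow [ProperSpace X] [Nonempty X] [MeasurableSpace X] [BorelSpace X]
    (hφ : IsAlmostFlow ω ϖ κ δ C φ) :
    ∃ ψ : Icc 0 T → Icc 0 T → X → X,
      (∀ ⦃r s t⦄, r ≤ s → s ≤ t → ∀ a, ψ t s (ψ s r a) = ψ t r a) ∧
      (∀ s t, Measurable (ψ t s)) ∧
      ∀ s a, (fun t => ψ t s a) ∈ davieSolutions ω ϖ φ (sewingConst κ δ C) s a := by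
  rcases isEmpty_or_nonempty (Icc 0 T) with hT | hT
  · exact ⟨fun _ _ a => a, fun _ _ _ _ _ _ => rfl, fun s => hT.elim s, fun s => hT.elim s⟩
  obtain ⟨Y, hY, hflow, hmeas⟩ := hφ.isSplicing_davieSolutions.exists_measurable_selection
    hφ.nonempty_davieSolutions (hφ.isClosed_davieSolutions _)
    (hφ.exists_dist_le_of_mem_davieSolutions hφ.sewingConst_nonneg)
    fun _ _ _ => hφ.continuous_of_mem_davieSolutions hφ.sewingConst_nonneg
  exact ⟨fun t s a => Y s a t, hflow, hmeas, hY⟩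

theorem exists_measurable_flow_on_real [ProperSpace X] [Nonempty X] [MeasurableSpace X]
    [BorelSpace X] (hφ : IsAlmostFlow ω ϖ κ δ C φ) (hT : 0 ≤ T) :
    ∃ ψ : ℝ → ℝ → X → X,
      (∀ t a, ψ t t a = a) ∧
      (∀ ⦃r s t⦄, r ≤ s → s ≤ t → ∀ a, ψ t s (ψ s r a) = ψ t r a) ∧
      (∀ s t, Measurable (ψ t s)) ∧
      (∀ s a, Continuous fun t => ψ t s a) ∧
      ∀ ⦃r : ℝ⦄ ⦃s t : Icc 0 T⦄, r ≤ s → s ≤ t → ∀ a,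
        dist (ψ t r a) (φ t s (ψ s r a)) ≤ sewingConst κ δ C * ϖ (ω s t) := by
  obtain ⟨ψ, hflow, hmeas, hsol⟩ := hφ.exists_measurable_flow
  let P := projIcc 0 T hT
  have hP : Monotone P := monotone_projIcc hT
  refine ⟨fun t s => ψ (P t) (P s), fun t a => (hsol (P t) a).1 (P t) le_rfl,
    fun r s t hrs hst => hflow (hP hrs) (hP hst), fun s t => hmeas _ _, fun s a => ?_,
    fun r s t hrs hst a => ?_⟩
  · exact (hφ.continuous_of_mem_davieSolutions hφ.sewingConst_nonneg (hsol (P s) a)).comp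
      continuous_projIcc
  · have hPs : P s = s := projIcc_val hT s
    have hPt : P t = t := projIcc_val hT t
    simp only [hPs, hPt]
    exact (hsol (P r) a).2 s t (hPs ▸ hP hrs) hst

end IsAlmostFlow

end AlmostFlow

section PathControl

variable {U : Type*} [NormedAddCommGroup U] {T : ℝ} {ω : ℝ → ℝ → ℝ} {p : ℝ} {x : Icc 0 T → U}
  {xp : ℝ}

theorem IsControl.norm_sub_le_of_subinterval (hω : IsControl T ω) (hp : 0 < p) (hxp : 0 ≤ xp)
    (hx : ∀ ⦃s t⦄, s ≤ t → ‖x t - x s‖ ≤ xp * ω s t ^ (1 / p)) {r s t u : Icc 0 T} (hrs : r ≤ s)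
    (hst : s ≤ t) (htu : t ≤ u) : ‖x t - x s‖ ≤ xp * ω r u ^ (1 / p) := by
  have := hω.nonneg s.2.1 hst t.2.2
  have := hω.mono r.2.1 hrs hst htu u.2.2
  exact (hx hst).trans (by gcongr)

theorem IsControl.norm_sub_mul_norm_sub_le (hω : IsControl T ω) (hp : 0 < p) (hxp : 0 ≤ xp)
    (hx : ∀ ⦃s t⦄, s ≤ t → ‖x t - x s‖ ≤ xp * ω s t ^ (1 / p)) {r s t : Icc 0 T} (hrs : r ≤ s)
    (hst : s ≤ t) : ‖x s - x r‖ * ‖x t - x s‖ ≤ xp ^ 2 * ω r t ^ (2 / p) := by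
  have hω₀ := hω.nonneg r.2.1 (hrs.trans hst) t.2.2
  calc ‖x s - x r‖ * ‖x t - x s‖ ≤ (xp * ω r t ^ (1 / p)) * (xp * ω r t ^ (1 / p)) := by
        gcongr
        · exact hω.norm_sub_le_of_subinterval hp hxp hx le_rfl hrs hst
        · exact hω.norm_sub_le_of_subinterval hp hxp hx hrs hst le_rfl
    _ = xp ^ 2 * (ω r t ^ (1 / p) * ω r t ^ (1 / p)) := by ring
    _ = xp ^ 2 * ω r t ^ (2 / p) := by
        rw [← Real.rpow_add_of_nonneg hω₀ (by positivity) (by positivity), ← add_div,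
          one_add_one_eq_two]

theorem IsControl.exists_norm_sub_lt (hω : IsControl T ω) (hp : 0 < p) (hxp : 0 ≤ xp)
    (hx : ∀ ⦃s t⦄, s ≤ t → ‖x t - x s‖ ≤ xp * ω s t ^ (1 / p)) {ε : ℝ} (hε : 0 < ε) :
    ∃ h > 0, ∀ ⦃s t : Icc 0 T⦄, s ≤ t → (t : ℝ) - s ≤ h → ‖x t - x s‖ < ε := by
  have hκ : (2 : ℝ) ^ (1 - 1 / p) < 2 :=
    (Real.rpow_lt_rpow_of_exponent_lt one_lt_two (sub_lt_self 1 (by positivity))).trans_eq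
      (Real.rpow_one 2)
  obtain ⟨h, hh, hlt⟩ := hω.exists_remainder_lt (isRemainder_rpow (by positivity)) hκ
    (show 0 < ε / (xp + 1) by positivity)
  refine ⟨h, hh, fun s t hst hgap => (hx hst).trans_lt ?_⟩
  have hω_lt := hlt s.2.1 hst t.2.2 hgap
  rw [lt_div_iff₀ (by positivity)] at hω_lt
  linarith [Real.rpow_nonneg (hω.nonneg s.2.1 hst t.2.2) (1 / p)]

end PathControl

section Young

variable {U V : Type*} [NormedAddCommGroup U] [NormedSpace ℝ U] [NormedAddCommGroup V]
  [NormedSpace ℝ V]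

/-- One step, from time `s` to time `t`, of the Euler scheme of the Young differential equation
`dy = f(y) dx`. -/
def youngEuler {τ : Type*} (x : τ → U) (f : V → U →L[ℝ] V) (t s : τ) (a : V) : V :=
  a + f a (x t - x s)

variable {f : V → U →L[ℝ] V} {M : ℝ} {K : NNReal}

theorem dist_youngEuler_self_le {τ : Type*} (hM : ∀ a, ‖f a‖ ≤ M) (x : τ → U) (t s : τ) (a : V) :
    dist (youngEuler x f t s a) a ≤ M * ‖x t - x s‖ := by
  rw [youngEuler, dist_self_add_left]
  exact (f a).le_of_opNorm_le (hM a) _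

theorem dist_youngEuler_le {τ : Type*} (hK : LipschitzWith K f) (x : τ → U) (t s : τ) (a b : V) :
    dist (youngEuler x f t s a) (youngEuler x f t s b) ≤ (1 + K * ‖x t - x s‖) * dist a b := by
  have hf : dist (f a (x t - x s)) (f b (x t - x s)) ≤ K * dist a b * ‖x t - x s‖ := by
    rw [dist_eq_norm, ← sub_apply]
    exact (f a - f b).le_of_opNorm_le ((dist_eq_norm (f a) (f b)).symm.trans_le
      (hK.dist_le_mul a b)) _
  exact (dist_add_add_le _ _ _ _).trans (by linarith)

theorem dist_youngEuler_comp_le {τ : Type*} (hM : ∀ a, ‖f a‖ ≤ M) (hK : LipschitzWith K f)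
    (x : τ → U) (t s r : τ) (a : V) :
    dist (youngEuler x f t s (youngEuler x f s r a)) (youngEuler x f t r a) ≤
      K * (M * ‖x s - x r‖) * ‖x t - x s‖ := by
  have hdiff : youngEuler x f t s (youngEuler x f s r a) - youngEuler x f t r a =
      (f (youngEuler x f s r a) - f a) (x t - x s) := by
    rw [sub_apply, youngEuler, youngEuler, youngEuler,
      ← sub_add_sub_cancel (x t) (x s) (x r), map_add]
    abel
  rw [dist_eq_norm, hdiff]
  refine ContinuousLinearMap.le_of_opNorm_le _ ?_ _
  rw [← dist_eq_norm]
  exact (hK.dist_le_mul _ _).trans (by gcongr; exact dist_youngEuler_self_le hM x s r a)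

variable {ω : ℝ → ℝ → ℝ} {p : ℝ}

theorem IsControl.exists_young_rate_lt_one {S : ℝ} (hω : IsControl S ω) (hS : 0 < S) (hp : 0 < p)
    (hp2 : p < 2) (c : ℝ) :
    ∃ T ∈ Ioc 0 S, (1 + c * ω 0 T ^ (1 / p) / 2) * 2 ^ (1 - 2 / p) < 1 := by
  have hlim : Tendsto (fun w : ℝ => (1 + c * w ^ (1 / p) / 2) * (2 : ℝ) ^ (1 - 2 / p)) (𝓝 0)
      (𝓝 (2 ^ (1 - 2 / p))) := by
    have hpow : Continuous fun w : ℝ => w ^ (1 / p) := Real.continuous_rpow_const (by positivity)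
    have hcont : Continuous fun w : ℝ => (1 + c * w ^ (1 / p) / 2) * (2 : ℝ) ^ (1 - 2 / p) := by
      fun_prop
    simpa [hp.ne'] using hcont.tendsto 0
  have hlt : (2 : ℝ) ^ (1 - 2 / p) < 1 :=
    Real.rpow_lt_one_of_one_lt_of_neg one_lt_two (sub_neg.mpr ((one_lt_div hp).mpr hp2))
  obtain ⟨ε, hε, hrate⟩ := Metric.eventually_nhds_iff.mp (hlim.eventually_lt_const hlt)
  obtain ⟨h, hh, hsmall⟩ := hω.small ε hε
  have hT : 0 < min h S := lt_min hh hS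
  refine ⟨min h S, ⟨hT, min_le_right h S⟩, hrate ?_⟩
  rw [dist_zero_right, Real.norm_of_nonneg (hω.nonneg le_rfl hT.le (min_le_right h S))]
  exact hsmall le_rfl hT.le (min_le_right h S) (by simp)

theorem isAlmostFlow_youngEuler {T : ℝ} {x : Icc 0 T → U} {xp : ℝ} (hT : 0 ≤ T)
    (hω : IsControl T ω) (hp : 0 < p) (hxp : 0 ≤ xp)
    (hx : ∀ ⦃s t⦄, s ≤ t → ‖x t - x s‖ ≤ xp * ω s t ^ (1 / p))
    (hM : ∀ a, ‖f a‖ ≤ M) (hK : LipschitzWith K f)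
    (hrate : (1 + K * xp * ω 0 T ^ (1 / p) / 2) * 2 ^ (1 - 2 / p) < 1) :
    IsAlmostFlow ω (fun w => w ^ (2 / p)) (2 ^ (1 - 2 / p)) (K * xp * ω 0 T ^ (1 / p))
      (K * M * xp ^ 2) (youngEuler x f) := by
  have hM₀ : 0 ≤ M := (norm_nonneg _).trans (hM 0)
  have hω₀ : 0 ≤ ω 0 T := hω.nonneg le_rfl hT le_rfl
  have hx_le : ∀ ⦃s t⦄, s ≤ t → ‖x t - x s‖ ≤ xp * ω 0 T ^ (1 / p) := fun s t hst =>
    hω.norm_sub_le_of_subinterval hp hxp hx (r := ⟨0, le_rfl, hT⟩) (u := ⟨T, hT, le_rfl⟩)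
      s.2.1 hst t.2.2
  refine
    { isControl := hω
      isRemainder := isRemainder_rpow (by positivity)
      delta_nonneg := by positivity
      defect_nonneg := by positivity
      rate_lt_one := hrate
      map_self := fun t a => by simp [youngEuler]
      dist_map_le := fun s t hst a b => ?_
      dist_comp_le := fun r s t hrs hst a => ?_
      bounded := ⟨M * (xp * ω 0 T ^ (1 / p)), fun s t hst a => ?_⟩
      small := fun ε hε => ?_ }
  · refine (dist_youngEuler_le hK x t s a b).trans ?_
    rw [mul_assoc (K : ℝ)]
    gcongr
    exact hx_le hst
  · calc _ ≤ K * (M * ‖x s - x r‖) * ‖x t - x s‖ := dist_youngEuler_comp_le hM hK x t s r a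
      _ = K * M * (‖x s - x r‖ * ‖x t - x s‖) := by ring
      _ ≤ K * M * (xp ^ 2 * ω r t ^ (2 / p)) :=
        mul_le_mul_of_nonneg_left (hω.norm_sub_mul_norm_sub_le hp hxp hx hrs hst)
          (by positivity)
      _ = K * M * xp ^ 2 * ω r t ^ (2 / p) := by ring
  · exact (dist_youngEuler_self_le hM x t s a).trans (by gcongr; exact hx_le hst)
  · obtain ⟨h, hh, hlt⟩ := hω.exists_norm_sub_lt hp hxp hx (show 0 < ε / (M + 1) by positivity)
    refine ⟨h, hh, fun s t hst hgap a => (dist_youngEuler_self_le hM x t s a).trans_lt ?_⟩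
    have hx_lt := hlt hst hgap
    rw [lt_div_iff₀ (by positivity)] at hx_lt
    linarith [norm_nonneg (x t - x s)]

end Young

theorem statement19_general {U V : Type*} [NormedAddCommGroup U] [NormedSpace ℝ U]
    [NormedAddCommGroup V] [NormedSpace ℝ V] [FiniteDimensional ℝ V] [MeasurableSpace V]
    [BorelSpace V] {S : ℝ} (hS : 0 < S) {ω : ℝ → ℝ → ℝ} (hω : IsControl S ω)
    {p : ℝ} (hp : 0 < p) (hp2 : p < 2) {x : ℝ → U} {xp : ℝ} (hxp : 0 ≤ xp)
    (hx : ∀ ⦃s t : ℝ⦄, 0 ≤ s → s ≤ t → t ≤ S → ‖x t - x s‖ ≤ xp * ω s t ^ (1 / p))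
    {f : V → U →L[ℝ] V} {M : ℝ} (hM : ∀ a, ‖f a‖ ≤ M) {K : NNReal} (hK : LipschitzWith K f) :
    ∃ T > (0 : ℝ), ∃ ψ : ℝ → ℝ → V → V,
      (∀ ⦃t : ℝ⦄, 0 ≤ t → t ≤ T → ∀ a : V, ψ t t a = a) ∧
      (∀ ⦃r s t : ℝ⦄, 0 ≤ r → r ≤ s → s ≤ t → t ≤ T → ∀ a : V,
        ψ t s (ψ s r a) = ψ t r a) ∧
      (∀ ⦃s t : ℝ⦄, 0 ≤ s → s ≤ t → t ≤ T → Measurable (ψ t s)) ∧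
      (∃ C : ℝ, ∀ ⦃s t : ℝ⦄, 0 ≤ s → s ≤ t → t ≤ T → ∀ a : V,
        ‖ψ t s a - (a + f a (x t - x s))‖ ≤ C * (1 + ‖f a‖) * ω s t ^ (2 / p)) ∧
      (∀ a : V, ContinuousOn (fun t : ℝ => ψ t 0 a) (Icc 0 T)) ∧
      ∃ C : ℝ, ∀ a : V, ∀ ⦃s t : ℝ⦄, 0 ≤ s → s ≤ t → t ≤ T →
        ‖ψ t 0 a - (ψ s 0 a + f (ψ s 0 a) (x t - x s))‖ ≤
          C * (1 + ‖f a‖) * ω s t ^ (2 / p) := by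
  obtain ⟨T, ⟨hT, hTS⟩, hrate⟩ := hω.exists_young_rate_lt_one hS hp hp2 (K * xp)
  have hφ := isAlmostFlow_youngEuler (x := fun t : Icc 0 T => x t) hT.le (hω.restrict hTS) hp hxp
    (fun s t hst => hx s.2.1 hst (t.2.2.trans hTS)) hM hK hrate
  have : ProperSpace V := FiniteDimensional.proper ℝ V
  obtain ⟨ψ, hself, hflow, hmeas, hcont, hψ⟩ := hφ.exists_measurable_flow_on_real hT.le
  set L := sewingConst (2 ^ (1 - 2 / p)) (K * xp * ω 0 T ^ (1 / p)) (K * M * xp ^ 2)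
  have hdavie : ∀ ⦃r s t : ℝ⦄, 0 ≤ r → r ≤ s → s ≤ t → t ≤ T → ∀ a : V,
      ‖ψ t r a - (ψ s r a + f (ψ s r a) (x t - x s))‖ ≤ L * (1 + ‖f a‖) * ω s t ^ (2 / p) := by
    intro r s t hr hrs hst htT a
    have hs := hr.trans hrs
    have hle := hψ (r := r) (s := ⟨s, hs, hst.trans htT⟩) (t := ⟨t, hs.trans hst, htT⟩) hrs hst a
    rw [dist_eq_norm, youngEuler] at hle
    refine hle.trans (mul_le_mul_of_nonneg_right ?_
      (Real.rpow_nonneg (hω.nonneg hs hst (htT.trans hTS)) _))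
    exact le_mul_of_one_le_right hφ.sewingConst_nonneg (by simp)
  refine ⟨T, hT, ψ, fun t _ _ => hself t, fun r s t _ hrs hst _ => hflow hrs hst,
    fun s t _ _ _ => hmeas s t, ⟨L, fun s t hs hst htT a => ?_⟩, fun a => (hcont 0 a).continuousOn,
    L, fun a s t hs hst htT => hdavie le_rfl hs hst htT a⟩
  simpa only [hself] using hdavie hs le_rfl hst htT a

/-- Corollary: a measurable flow for Young differential equations.
Let `V` be finite-dimensional, `x` a path of finite `p`-variation (`1 ≤ p < 2`)
controlled by `ω`, and `f ∈ C¹_b(V, L(U,V))`. With `φ_{t,s}(a) = a + f(a)x_{s,t}`,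
for `T` small enough there exists a family `ψ = (ψ_{t,s})_{0≤s≤t≤T}` with the flow
property, each `ψ_{t,s}` Borel measurable, lying in the same galaxy as `φ`:
`‖ψ_{t,s}(a) − φ_{t,s}(a)‖ ≤ C(1+‖f(a)‖)ω_{s,t}^{2/p}`. In particular each path
`t ↦ ψ_{t,0}(a)` is a solution in the sense of Davie of `y_t = a + ∫₀ᵗ f(y_s)dx_s`. -/
theorem statement19 {U V : Type*} [NormedAddCommGroup U] [NormedSpace ℝ U]
    [CompleteSpace U] [NormedAddCommGroup V] [NormedSpace ℝ V]
    [FiniteDimensional ℝ V] [MeasurableSpace V] [BorelSpace V]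
    (ω : ℝ → ℝ → ℝ) (hω : ∀ S > (0:ℝ), IsControl S ω)
    (p : ℝ) (hp1 : 1 ≤ p) (hp2 : p < 2)
    (x : ℝ → U) (xp : ℝ) (hxp : 0 ≤ xp)
    (hx : ∀ ⦃s t : ℝ⦄, 0 ≤ s → s ≤ t → ‖x t - x s‖ ≤ xp * ω s t ^ (1 / p))
    (f : V → U →L[ℝ] V) (hf : ContDiff ℝ 1 f)
    (Mf : ℝ) (hfb : ∀ a : V, ‖f a‖ ≤ Mf)
    (Mdf : ℝ) (hdfb : ∀ a : V, ‖fderiv ℝ f a‖ ≤ Mdf) :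
    ∃ T > (0:ℝ), ∃ ψ : ℝ → ℝ → V → V,
      (∀ ⦃t : ℝ⦄, 0 ≤ t → t ≤ T → ∀ a : V, ψ t t a = a) ∧
      (∀ ⦃r s t : ℝ⦄, 0 ≤ r → r ≤ s → s ≤ t → t ≤ T → ∀ a : V,
        ψ t s (ψ s r a) = ψ t r a) ∧
      (∀ ⦃s t : ℝ⦄, 0 ≤ s → s ≤ t → t ≤ T → Measurable (ψ t s)) ∧
      (∃ C : ℝ, ∀ ⦃s t : ℝ⦄, 0 ≤ s → s ≤ t → t ≤ T → ∀ a : V,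
        ‖ψ t s a - (a + f a (x t - x s))‖ ≤
          C * (1 + ‖f a‖) * ω s t ^ (2 / p)) ∧
      (∀ a : V, ContinuousOn (fun t : ℝ => ψ t 0 a) (Set.Icc 0 T)) ∧
      ∃ K : ℝ, ∀ a : V, ∀ ⦃s t : ℝ⦄, 0 ≤ s → s ≤ t → t ≤ T →
        ‖ψ t 0 a - (ψ s 0 a + f (ψ s 0 a) (x t - x s))‖ ≤
          K * (1 + ‖f a‖) * ω s t ^ (2 / p) := by
  exact statement19_general one_pos (hω 1 one_pos) (by linarith) hp2 hxp
    (fun s t hs hst _ => hx hs hst) hfb (lipschitzWith_of_nnnorm_fderiv_le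
      (hf.differentiable one_ne_zero) fun a => NNReal.le_toNNReal_of_coe_le (hdfb a))

end
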